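/- Let H be a hereditary abelian category, i.e., Ext^n_H(−,−) = 0 for all n ≥ 2. Then any pseudo-identity on the unbounded derived category D(H) with respect to the canonical pre-weight structure is isomorphic, as a triangle functor, to the identity functor of D(H). -/

import Mathlib

/-!
Over a hereditary category every object `X` of `D(H)` is the coproduct, in `D(H)`, of objects `C n`
with cohomology concentrated in degree `n`. No infinite coproducts are assumed in `H`: since
`Ext^2 = 0`, each `H^n` of a complex `K` is split off by a complex `C n` in degrees `n - 1` and `n`
(`Hereditary.exists_twoTerm`), the coproduct `∐ C` is degreewise a finite direct sum, and
`∐ C ⟶ K` is a quasi-isomorphism. It remains a coproduct in `D(H)` because morphisms out of stalk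
objects are represented by roofs of two-term complexes, which can again be summed
(`Hereditary.isDecomp`). For the same reason a morphism from a stalk object in degree `k` to `X`
only involves the summands `C (k - 1)`, `C k` and `C (k + 1)`.

For a pseudo-identity `F`, the identity on the core, transported by the shift, provides isomorphisms
`F C ≅ C` for stalk objects `C` (`stalkHom`). They are natural for morphisms between stalk objects
in the same degree by assumption, and for classes in `Ext^1` because `F` preserves triangles and
there are no morphisms of negative degree (`stalkHom_naturality_ext`); all other morphisms between
stalk objects vanish. As `F` is an equivalence it preserves the coproduct decompositions, so these
isomorphisms extend uniquely to all objects, and naturality and compatibility with shifts can be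
checked on stalk summands (`exists_iso`).
-/



open CategoryTheory Category Limits Pretriangulated ZeroObject

universe v u

variable {T : Type u} [Category.{v} T] [HasZeroObject T] [HasShift T ℤ] [Preadditive T]
  [∀ n : ℤ, (CategoryTheory.shiftFunctor T n).Additive] [Pretriangulated T]

/-- `Z ∈ star X Y` iff there is a distinguished triangle `A → Z → B → A⟦1⟧`
with `A ∈ X` and `B ∈ Y`. -/
def star (X Y : Set T) : Set T :=
  {Z | ∃ (A B : T) (f : A ⟶ Z) (g : Z ⟶ B) (h : B ⟶ A⟦(1:ℤ)⟧),
    A ∈ X ∧ B ∈ Y ∧ Triangle.mk f g h ∈ distTriang T}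

/-- The cone of `f` lies in `S`. -/
def coneIn {A B : T} (f : A ⟶ B) (S : Set T) : Prop :=
  ∃ (Z : T) (g : B ⟶ Z) (h : Z ⟶ A⟦(1:ℤ)⟧),
    Triangle.mk f g h ∈ (distTriang T) ∧ Z ∈ S

/-- `U≥m = Σ^{-m}(U≥0)`. -/
def geM (ge : Set T) (m : ℤ) : Set T := {X | X⟦m⟧ ∈ ge}

/-- `U≤m = Σ^{-m}(U≤0)`. -/
def leM (le : Set T) (m : ℤ) : Set T := {X | X⟦m⟧ ∈ le}

/-- `U[m,n] = U≥m ∩ U≤n`. -/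
def interval (ge le : Set T) (m n : ℤ) : Set T := geM ge m ∩ leM le n

/-- The core `C = U≥0 ∩ U≤0`. -/
def coreSet (ge le : Set T) : Set T := ge ∩ le

/-- `Σ^{-k}(C)`. -/
def coreShift (ge le : Set T) (k : ℤ) : Set T := {X | X⟦k⟧ ∈ coreSet ge le}

/-- `U₊ = ⋂ₘ U≥m`. -/
def plusSet (ge : Set T) : Set T := {X | ∀ m : ℤ, X ∈ geM ge m}

/-- `U₋ = ⋂ₘ U≤m`. -/
def minusSet (le : Set T) : Set T := {X | ∀ m : ℤ, X ∈ leM le m}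

/-- `U_b = ⋃_{m ≤ n} U[m,n]`. -/
def boundedSet (ge le : Set T) : Set T :=
  {X | ∃ m n : ℤ, m ≤ n ∧ X ∈ interval ge le m n}

/-- A pre-weight structure: a pair of full additive subcategories (given by their
classes of objects, closed under isomorphisms, containing the zero objects and closed
under finite biproducts) with `U≥0 ∗ Σ(U≤0) = T`, `U≥0` closed under `Σ⁻¹` and
extensions, and `U≤0` closed under `Σ` and extensions. -/
structure IsPreWeightStructure (ge le : Set T) : Prop where
  ge_iso : ∀ ⦃X Y : T⦄, (X ≅ Y) → X ∈ ge → Y ∈ ge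
  le_iso : ∀ ⦃X Y : T⦄, (X ≅ Y) → X ∈ le → Y ∈ le
  ge_zero : ∀ Z : T, IsZero Z → Z ∈ ge
  le_zero : ∀ Z : T, IsZero Z → Z ∈ le
  ge_biprod : ∀ ⦃X Y : T⦄ (b : BinaryBicone X Y), b.IsBilimit → X ∈ ge → Y ∈ ge → b.pt ∈ ge
  le_biprod : ∀ ⦃X Y : T⦄ (b : BinaryBicone X Y), b.IsBilimit → X ∈ le → Y ∈ le → b.pt ∈ le
  decomp : ∀ Z : T, Z ∈ star ge (leM le (-1))
  ge_shiftNeg : ∀ X ∈ ge, X⟦(-1:ℤ)⟧ ∈ ge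
  ge_ext : star ge ge ⊆ ge
  le_shiftPos : ∀ X ∈ le, X⟦(1:ℤ)⟧ ∈ le
  le_ext : star le le ⊆ le

/-- A pseudo-identity with respect to the pre-weight structure `(ge, le)`: an
autoequivalence which fixes every object on the nose and restricts to the identity
functor on the core.  (That it is moreover a triangle functor is imposed separately.) -/
structure IsPseudoIdentity (ge le : Set T) (F : T ⥤ T) : Prop where
  isEquivalence : F.IsEquivalence
  obj_eq : ∀ X : T, F.obj X = X
  map_core : ∀ (X Y : T), X ∈ coreSet ge le → Y ∈ coreSet ge le → ∀ f : X ⟶ Y,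
    F.map f = eqToHom (obj_eq X) ≫ f ≫ eqToHom (obj_eq Y).symm

universe w v₂ u₂

variable (H : Type u₂) [Category.{v₂} H] [Abelian H] [HasDerivedCategory.{w} H]

/-- `D≥0`: objects of the derived category isomorphic to a complex concentrated in
non-negative degrees. -/
def Dge : Set (DerivedCategory H) :=
  {X | ∃ K : CochainComplex H ℤ, (∀ n : ℤ, n < 0 → IsZero (K.X n)) ∧
    Nonempty (X ≅ DerivedCategory.Q.obj K)}

/-- `D≤0`: objects of the derived category isomorphic to a complex concentrated in
non-positive degrees. -/
def Dle : Set (DerivedCategory H) :=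
  {X | ∃ K : CochainComplex H ℤ, (∀ n : ℤ, 0 < n → IsZero (K.X n)) ∧
    Nonempty (X ≅ DerivedCategory.Q.obj K)}


namespace PseudoId

variable {A : Type u₂} [Category.{v₂} A] [Abelian A]

/-! ### Coproducts of two-term complexes -/

lemma hasCoproduct_of_finite_support (D : ℤ → A) (s : Finset ℤ)
    (h : ∀ m, m ∉ s → IsZero (D m)) : HasCoproduct D := by
  have := HasFiniteBiproducts.of_hasFiniteProducts (C := A)
  classical
  let c : Cofan D := Cofan.mk (⨁ fun m : s => D m)
    (fun m => if hm : m ∈ s then biproduct.ι (fun m : s => D m) ⟨m, hm⟩ else 0)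
  refine ⟨⟨⟨c, Cofan.IsColimit.mk c (fun t => biproduct.desc (fun m : s => t.inj m)) ?_ ?_⟩⟩⟩
  · intro t m
    by_cases hm : m ∈ s
    · simp [c, hm]
    · exact (h m hm).eq_of_src _ _
  · intro t f hf
    refine biproduct.hom_ext' _ _ (fun m => ?_)
    have := hf m
    simpa [c, m.2] using this

/-- The family `(C m)` of cochain complexes is two-term: `C m` lives in degrees `m - 1` and `m`.
In each degree only two members of the family are nonzero, so `∐ C` is degreewise a finite direct
sum, whatever colimits exist in `A`. -/
def TwoTerm (C : ℤ → CochainComplex A ℤ) : Prop :=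
  ∀ m, (C m).IsStrictlyGE (m - 1) ∧ (C m).IsStrictlyLE m

lemma TwoTerm.isZero {C : ℤ → CochainComplex A ℤ} (hC : TwoTerm C) (m i : ℤ)
    (h : i < m - 1 ∨ m < i) : IsZero ((C m).X i) := by
  obtain ⟨_, _⟩ := hC m
  rcases h with h | h
  · exact (C m).isZero_of_isStrictlyGE (m - 1) i h
  · exact (C m).isZero_of_isStrictlyLE m i h

lemma TwoTerm.hasCoproduct {C : ℤ → CochainComplex A ℤ} (hC : TwoTerm C) : HasCoproduct C := by
  have : ∀ i, HasColimit (Discrete.functor C ⋙ HomologicalComplex.eval A (ComplexShape.up ℤ) i) := by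
    intro i
    have := hasCoproduct_of_finite_support (fun m => (C m).X i) {i, i + 1} (fun m hm => by
      simp at hm
      exact hC.isZero m i (by omega))
    exact hasColimit_of_iso (F := Discrete.functor (fun m => (C m).X i))
      (Discrete.natIso (fun _ => Iso.refl _))
  change HasColimit _
  infer_instance

lemma TwoTerm.f_ext {C : ℤ → CochainComplex A ℤ} (hC : TwoTerm C) [HasCoproduct C]
    {Z : A} (i : ℤ) {f g : (∐ C).X i ⟶ Z}
    (h : ∀ m, (Sigma.ι C m).f i ≫ f = (Sigma.ι C m).f i ≫ g) : f = g := by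
  have : ∀ i, HasColimit (Discrete.functor C ⋙ HomologicalComplex.eval A (ComplexShape.up ℤ) i) := by
    intro i
    have := hasCoproduct_of_finite_support (fun m => (C m).X i) {i, i + 1} (fun m hm => by
      simp at hm
      exact hC.isZero m i (by omega))
    exact hasColimit_of_iso (F := Discrete.functor (fun m => (C m).X i))
      (Discrete.natIso (fun _ => Iso.refl _))
  have hl := isColimitOfPreserves (HomologicalComplex.eval A (ComplexShape.up ℤ) i)
    (colimit.isColimit (Discrete.functor C))
  exact hl.hom_ext (fun ⟨m⟩ => h m)

/-- In degree `i` only `C i` and `C (i + 1)` contribute to `∐ C`, so the sum of the corresponding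
idempotents is already the identity there. -/
lemma TwoTerm.sum_f {C : ℤ → CochainComplex A ℤ} (hC : TwoTerm C) [HasCoproduct C]
    (i : ℤ) (s : Finset ℤ) (hi : i ∈ s) (hi' : i + 1 ∈ s) :
    (∑ m ∈ s, Sigma.π C m ≫ Sigma.ι C m).f i = 𝟙 _ := by
  apply hC.f_ext
  intro m
  by_cases hm : m ∈ s
  · rw [← HomologicalComplex.comp_f, Preadditive.comp_sum, Finset.sum_eq_single m]
    · simp
    · intro b _ hb
      rw [Sigma.ι_π_of_ne_assoc _ hb.symm, zero_comp]
    · exact fun h => (h hm).elim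
  · apply (hC.isZero m i _).eq_of_src
    have : m ≠ i := fun h => hm (h ▸ hi)
    have : m ≠ i + 1 := fun h => hm (h ▸ hi')
    omega

lemma homologyMap_eq_of_f {K L : CochainComplex A ℤ} (f g : K ⟶ L) (i : ℤ) (h : f.f i = g.f i) :
    HomologicalComplex.homologyMap f i = HomologicalComplex.homologyMap g i := by
  have : HomologicalComplex.cyclesMap f i = HomologicalComplex.cyclesMap g i := by
    rw [← cancel_mono (L.iCycles i)]
    simp [h]
  rw [← cancel_epi (K.homologyπ i)]
  simp [this]

/-- For each `m`, the cohomology of `C m` is concentrated in degree `m`. -/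
def Conc (C : ℤ → CochainComplex A ℤ) : Prop :=
  ∀ m i, i ≠ m → IsZero ((C m).homology i)

lemma TwoTerm.isIso_homologyMap_ι {C : ℤ → CochainComplex A ℤ} (hC : TwoTerm C) (hC' : Conc C)
    [HasCoproduct C] (n : ℤ) : IsIso (HomologicalComplex.homologyMap (Sigma.ι C n) n) := by
  refine ⟨HomologicalComplex.homologyMap (Sigma.π C n) n, ?_, ?_⟩
  · rw [← HomologicalComplex.homologyMap_comp]
    simp
  · rw [← HomologicalComplex.homologyMap_comp]
    have h1 := homologyMap_eq_of_f _ (𝟙 _) n (hC.sum_f n {n, n + 1} (by simp) (by simp))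
    rw [Finset.sum_pair (by simp), HomologicalComplex.homologyMap_add,
      HomologicalComplex.homologyMap_comp (Sigma.π C (n + 1)),
      (hC' (n + 1) n (by simp)).eq_of_tgt (HomologicalComplex.homologyMap (Sigma.π C (n + 1)) n) 0,
      zero_comp, add_zero] at h1
    simpa using h1

/-- A chain map to `∐ C` from a complex in degrees `k - 1` and `k` only meets the summands
`C (k - 1)`, `C k` and `C (k + 1)`. -/
lemma TwoTerm.hom_eq_sum {C : ℤ → CochainComplex A ℤ} (hC : TwoTerm C) [HasCoproduct C]
    (W : CochainComplex A ℤ) (k : ℤ) [W.IsStrictlyGE (k - 1)] [W.IsStrictlyLE k]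
    (f : W ⟶ ∐ C) :
    f = ∑ m ∈ {k - 1, k, k + 1}, (f ≫ Sigma.π C m) ≫ Sigma.ι C m := by
  ext i
  by_cases h1 : i < k - 1
  · exact (W.isZero_of_isStrictlyGE (k - 1) i h1).eq_of_src _ _
  by_cases h2 : k < i
  · exact (W.isZero_of_isStrictlyLE k i h2).eq_of_src _ _
  have := hC.sum_f i {k - 1, k, k + 1} (by simp; omega) (by simp; omega)
  simp only [assoc]
  rw [← Preadditive.comp_sum, HomologicalComplex.comp_f, this, comp_id]

/-- The two-term complex is `K.X (n - 1) ⟶ K.cycles n`, in degrees `n - 1` and `n`. -/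
lemma exists_double (K : CochainComplex A ℤ) (n : ℤ) :
    ∃ (T : CochainComplex A ℤ) (_ : T.IsStrictlyGE (n - 1)) (_ : T.IsStrictlyLE n) (φ : T ⟶ K),
      IsIso (HomologicalComplex.homologyMap φ n) := by
  have hrel : (ComplexShape.up ℤ).Rel (n - 1) n := by simp
  have hne : n - 1 ≠ n := by simp
  let T := HomologicalComplex.double (K.toCycles (n - 1) n) hrel
  let φ : T ⟶ K := HomologicalComplex.mkHomFromDouble hrel hne (𝟙 _) (K.iCycles n) (by simp)
    (by simp)
  refine ⟨T, ?_, ?_, φ, ?_⟩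
  · rw [CochainComplex.isStrictlyGE_iff]
    intro i hi
    exact HomologicalComplex.isZero_double_X _ hrel _ (by omega) (by omega)
  · rw [CochainComplex.isStrictlyLE_iff]
    intro i hi
    exact HomologicalComplex.isZero_double_X _ hrel _ (by omega) (by omega)
  · apply ShortComplex.isIso_homologyMap_of_isIso_cyclesMap_of_epi
    · change IsIso (HomologicalComplex.cyclesMap φ n)
      have : IsIso (T.iCycles n) := T.isIso_iCycles n _ rfl
        (HomologicalComplex.double_d_eq_zero₀ _ hrel _ _ hne.symm)
      have : HomologicalComplex.cyclesMap φ n =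
          T.iCycles n ≫ (HomologicalComplex.doubleXIso₁ _ hrel hne).hom := by
        rw [← cancel_mono (K.iCycles n), HomologicalComplex.cyclesMap_i]
        simp [φ, T]
      rw [this]
      infer_instance
    · have : Epi (φ.f (n - 1)) := by
        simp only [φ, HomologicalComplex.mkHomFromDouble_f₀]
        infer_instance
      have h : (ComplexShape.up ℤ).prev n = n - 1 := by simp
      change Epi (φ.f ((ComplexShape.up ℤ).prev n))
      rw [h]
      exact this

end PseudoId

namespace PseudoId

section

variable {H}

open DerivedCategory

/-! ### Stalk objects of the derived category -/

/-- `X` has cohomology concentrated in degree `n`. -/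
structure IsStalk (X : DerivedCategory H) (n : ℤ) : Prop where
  isGE : X.IsGE n
  isLE : X.IsLE n

lemma IsStalk.of_iso {X Y : DerivedCategory H} {n : ℤ} (h : IsStalk X n) (e : X ≅ Y) :
    IsStalk Y n := by
  have := h.isGE
  have := h.isLE
  exact ⟨TStructure.t.isGE_of_iso e n, TStructure.t.isLE_of_iso e n⟩

lemma IsStalk.shift {X : DerivedCategory H} {n : ℤ} (h : IsStalk X n) (a m : ℤ)
    (hm : a + m = n) : IsStalk (X⟦a⟧) m := by
  have := h.isGE
  have := h.isLE
  exact ⟨TStructure.t.isGE_shift X n a m hm, TStructure.t.isLE_shift X n a m hm⟩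

lemma isIso_homologyMap_iff {K L : CochainComplex H ℤ} (φ : K ⟶ L) (n : ℤ) :
    IsIso ((homologyFunctor H n).map (Q.map φ)) ↔
      IsIso (HomologicalComplex.homologyMap φ n) :=
  NatIso.isIso_map_iff (homologyFunctorFactors H n) φ

lemma isStalk_Q_obj_iff (K : CochainComplex H ℤ) (n : ℤ) :
    IsStalk (Q.obj K) n ↔ ∀ i, i ≠ n → IsZero (K.homology i) := by
  have eq := fun i ↦ ((homologyFunctorFactors H i).app K).isZero_iff
  simp only [Functor.comp_obj, HomologicalComplex.homologyFunctor_obj] at eq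
  constructor
  · rintro ⟨h1, h2⟩ i hi
    rw [isGE_iff] at h1
    rw [isLE_iff] at h2
    rw [← eq]
    rcases lt_or_gt_of_ne hi with h | h
    · exact h1 i h
    · exact h2 i h
  · intro h
    constructor
    · rw [isGE_iff]
      exact fun i hi => (eq i).2 (h i hi.ne)
    · rw [isLE_iff]
      exact fun i hi => (eq i).2 (h i hi.ne')

/-! ### Splitting over a hereditary category -/

variable (H) in
/-- `Ext^n` vanishes for all `n ≥ 2`, the Ext groups being computed in the derived category. -/
def Hereditary : Prop := ∀ (M N : H) (n : ℕ), 2 ≤ n →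
      ∀ f : (DerivedCategory.singleFunctor H 0).obj M ⟶
        ((DerivedCategory.singleFunctor H 0).obj N)⟦(n : ℤ)⟧, f = 0

lemma Hereditary.hom_eq_zero (hH : Hereditary H) {X Y : DerivedCategory H} (n : ℤ)
    (hX : IsStalk X n) (hY : IsStalk Y (n - 2)) (f : X ⟶ Y) : f = 0 := by
  obtain ⟨h1, h2⟩ := hX.shift n 0 (by simp)
  obtain ⟨h3, h4⟩ := (hY.shift n (-2) (by ring)).shift (-2) 0 (by simp)
  obtain ⟨M, ⟨eM⟩⟩ := exists_iso_singleFunctor_obj_of_isGE_of_isLE (X⟦n⟧) 0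
  obtain ⟨N, ⟨eN⟩⟩ := exists_iso_singleFunctor_obj_of_isGE_of_isLE (Y⟦n⟧⟦(-2 : ℤ)⟧) 0
  let e : Y⟦n⟧ ≅ ((singleFunctor H 0).obj N)⟦((2 : ℕ) : ℤ)⟧ :=
    ((shiftFunctorCompIsoId _ (-2 : ℤ) ((2 : ℕ) : ℤ) (by simp)).app (Y⟦n⟧)).symm ≪≫
      (shiftFunctor _ ((2 : ℕ) : ℤ)).mapIso eN
  have h := hH M N 2 le_rfl (eM.inv ≫ f⟦n⟧' ≫ e.hom)
  apply (shiftFunctor (DerivedCategory H) n).map_injective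
  rw [Functor.map_zero, ← cancel_epi eM.inv, ← cancel_mono e.hom, assoc, h]
  simp

/-- Cohomology in degree `n` is split off by a two-term complex. The two-term complex `T` of
`exists_double` has the right `H^n` but also some `H^{n-1}`; the connecting map of its truncation
triangle lies in an `Ext^2` group and so vanishes, and a section of `T ⟶ τ≥n T` is represented by
a roof of two-term complexes. -/
lemma Hereditary.exists_twoTerm (hH : Hereditary H) (K : CochainComplex H ℤ) (n : ℤ) :
    ∃ (C : CochainComplex H ℤ) (_ : C.IsStrictlyGE (n - 1)) (_ : C.IsStrictlyLE n) (φ : C ⟶ K),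
      IsIso (HomologicalComplex.homologyMap φ n) ∧ ∀ i, i ≠ n → IsZero (C.homology i) := by
  obtain ⟨T, hT, hT', φ, hφ⟩ := exists_double K n
  obtain ⟨X, Y, hX, hY, f, g, δ, hdist⟩ :=
    TStructure.t.exists_triangle (Q.obj T) (n - 1) n (by simp)
  have hX1 : X.IsLE (n - 1) := ⟨hX⟩
  have hY1 : Y.IsGE n := ⟨hY⟩
  have hX0 : ∀ i, n ≤ i → IsZero ((homologyFunctor H i).obj X) := fun i hi =>
    X.isZero_of_isLE (n - 1) i (by omega)
  have hY0 : ∀ i, i < n → IsZero ((homologyFunctor H i).obj Y) := fun i hi =>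
    Y.isZero_of_isGE n i hi
  have hX2 : X.IsGE (n - 1) := by
    rw [isGE_iff]
    intro i hi
    have := HomologySequence.exact₁ _ hdist (i - 1) i (by simp)
    exact this.isZero_X₂ ((hY0 _ (by omega)).eq_of_src _ _)
      (((Q.obj T).isZero_of_isGE (n - 1) i hi).eq_of_tgt _ _)
  have hY2 : Y.IsLE n := by
    rw [isLE_iff]
    intro i hi
    have := HomologySequence.exact₃ _ hdist i (i + 1) (by simp)
    exact this.isZero_X₂ (((Q.obj T).isZero_of_isLE n i hi).eq_of_src _ _)
      ((hX0 _ (by omega)).eq_of_tgt _ _)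
  have hδ : δ = 0 := hH.hom_eq_zero n ⟨hY1, hY2⟩ (IsStalk.shift ⟨hX2, hX1⟩ 1 _ (by ring)) δ
  obtain ⟨s, hs⟩ : ∃ s : Y ⟶ Q.obj T, 𝟙 Y = s ≫ g := by
    apply Triangle.coyoneda_exact₃ _ hdist
    rw [hδ]
    exact comp_zero
  have hg : IsIso ((homologyFunctor H n).map g) := by
    have h1 : Mono ((homologyFunctor H n).map g) :=
      (HomologySequence.mono_homologyMap_mor₂_iff _ hdist n).2
      ((hX0 n le_rfl).eq_of_src _ _)
    have h2 : Epi ((homologyFunctor H n).map g) :=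
      (HomologySequence.epi_homologyMap_mor₂_iff _ hdist n (n + 1) rfl).2
      ((hX0 (n + 1) (by omega)).eq_of_tgt _ _)
    exact isIso_of_mono_of_epi _
  have hs' : IsIso ((homologyFunctor H n).map s) := by
    have : IsIso ((homologyFunctor H n).map s ≫ (homologyFunctor H n).map g) := by
      rw [← Functor.map_comp, ← hs]
      infer_instance
    exact IsIso.of_isIso_comp_right _ ((homologyFunctor H n).map g)
  obtain ⟨W, _, hW, ⟨e⟩⟩ := exists_iso_Q_obj_of_isGE_of_isLE Y n n
  have : W.IsStrictlyGE (n - 1) := W.isStrictlyGE_of_ge (n - 1) n (by simp)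
  obtain ⟨C, hC, hC', a, ha, b, hb⟩ :=
    right_fac_of_isStrictlyLE_of_isStrictlyGE (n - 1) n (e.inv ≫ s)
  refine ⟨C, hC, hC', b ≫ φ, ?_, ?_⟩
  · rw [HomologicalComplex.homologyMap_comp]
    have : IsIso (HomologicalComplex.homologyMap b n) := by
      rw [← isIso_homologyMap_iff, show Q.map b = Q.map a ≫ e.inv ≫ s by simp [hb],
        Functor.map_comp, Functor.map_comp]
      infer_instance
    infer_instance
  · rw [← isStalk_Q_obj_iff]
    exact IsStalk.of_iso ⟨hY1, hY2⟩ (e ≪≫ (asIso (Q.map a)).symm)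

/-- Morphisms out of a stalk object in degree `n` are represented by roofs whose apex lives in
degrees `n - 1` and `n`. -/
lemma Hereditary.exists_roof (hH : Hereditary H) {W Y : CochainComplex H ℤ} (n : ℤ)
    (hW : IsStalk (Q.obj W) n) (g : Q.obj W ⟶ Q.obj Y) :
    ∃ (C : CochainComplex H ℤ) (_ : C.IsStrictlyGE (n - 1)) (_ : C.IsStrictlyLE n)
      (s : C ⟶ W) (_ : IsIso (Q.map s)) (b : C ⟶ Y), Q.map s ≫ g = Q.map b := by
  obtain ⟨C, s, hs, b, rfl⟩ := right_fac g
  obtain ⟨C', h1, h2, φ, hφ, hC'⟩ := hH.exists_twoTerm C n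
  have hC := (isStalk_Q_obj_iff C n).1 (hW.of_iso (asIso (Q.map s)).symm)
  have : IsIso (Q.map φ) := by
    rw [isIso_iff]
    intro i
    rw [isIso_homologyMap_iff]
    by_cases hi : i = n
    · subst hi
      exact hφ
    · exact (hC' i hi).isIso (hC i hi) _
  refine ⟨C', h1, h2, φ ≫ s, ?_, φ ≫ b, by simp⟩
  rw [Functor.map_comp]
  infer_instance

/-- The maps `ι n` exhibit `X` as a coproduct in the derived category of objects `C n` with
cohomology concentrated in degree `n`; moreover each morphism to `X` from a stalk object in degree
`k` is a sum of morphisms through `C (k - 1)`, `C k` and `C (k + 1)`. The last condition says that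
stalk objects behave as compact objects with respect to this coproduct. -/
structure IsDecomp {X : DerivedCategory H} (C : ℤ → DerivedCategory H) (ι : ∀ n, C n ⟶ X) :
    Prop where
  isStalk : ∀ n, IsStalk (C n) n
  exists_desc : ∀ {Y : DerivedCategory H} (g : ∀ n, C n ⟶ Y), ∃ f : X ⟶ Y, ∀ n, ι n ≫ f = g n
  hom_ext : ∀ {Y : DerivedCategory H} {f f' : X ⟶ Y}, (∀ n, ι n ≫ f = ι n ≫ f') → f = f'
  exists_sum : ∀ {W : DerivedCategory H} (k : ℤ) (_ : IsStalk W k) (h : W ⟶ X),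
    ∃ h' : ∀ m, W ⟶ C m, h = ∑ m ∈ {k - 1, k, k + 1}, h' m ≫ ι m

lemma IsDecomp.of_iso {X X' : DerivedCategory H} {C : ℤ → DerivedCategory H} {ι : ∀ n, C n ⟶ X}
    (h : IsDecomp C ι) (e : X ≅ X') : IsDecomp C (fun n => ι n ≫ e.hom) where
  isStalk := h.isStalk
  exists_desc g := by
    obtain ⟨f, hf⟩ := h.exists_desc g
    exact ⟨e.inv ≫ f, by simpa⟩
  hom_ext {Y f f'} hf := by
    rw [← cancel_epi e.hom]
    exact h.hom_ext (by simpa using hf)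
  exists_sum k hW g := by
    obtain ⟨h', hh'⟩ := h.exists_sum k hW (g ≫ e.inv)
    refine ⟨h', ?_⟩
    rw [← cancel_mono e.inv, hh', Preadditive.sum_comp]
    simp

lemma isIso_Q_map_of_ι {C : ℤ → CochainComplex H ℤ} (hC : TwoTerm C) (hC' : Conc C)
    [HasCoproduct C] {K : CochainComplex H ℤ} (φ : ∐ C ⟶ K)
    (h : ∀ n, IsIso (HomologicalComplex.homologyMap (Sigma.ι C n ≫ φ) n)) : IsIso (Q.map φ) := by
  rw [isIso_iff]
  intro n
  rw [isIso_homologyMap_iff]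
  have h1 := hC.isIso_homologyMap_ι hC' n
  have h2 := h n
  rw [HomologicalComplex.homologyMap_comp] at h2
  exact IsIso.of_isIso_comp_left (HomologicalComplex.homologyMap (Sigma.ι C n) n) _

/-- Each `g n` is represented by a roof with two-term apex `D n`; since `∐ D ⟶ ∐ C` is again a
quasi-isomorphism, these roofs assemble to a roof out of `∐ C`. -/
lemma Hereditary.exists_desc (hH : Hereditary H) {C : ℤ → CochainComplex H ℤ}
    (hC : TwoTerm C) (hC' : Conc C) [HasCoproduct C] {Y : DerivedCategory H}
    (g : ∀ n, Q.obj (C n) ⟶ Y) : ∃ f : Q.obj (∐ C) ⟶ Y, ∀ n, Q.map (Sigma.ι C n) ≫ f = g n := by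
  obtain ⟨Y', ⟨e⟩⟩ : ∃ K, Nonempty (Q.obj K ≅ Y) := ⟨_, ⟨Q.objObjPreimageIso Y⟩⟩
  have hst : ∀ n, IsStalk (Q.obj (C n)) n := fun n => (isStalk_Q_obj_iff _ _).2 (hC' n)
  choose D h1 h2 s hs b hb using fun n => hH.exists_roof n (hst n) (g n ≫ e.inv)
  have hD : TwoTerm D := fun n => ⟨h1 n, h2 n⟩
  have hD' : Conc D := fun n => (isStalk_Q_obj_iff _ _).1
    ((hst n).of_iso (asIso (Q.map (s n))).symm)
  have := hD.hasCoproduct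
  have : IsIso (Q.map (Limits.Sigma.map s)) := by
    apply isIso_Q_map_of_ι hD hD'
    intro n
    rw [Sigma.ι_map, HomologicalComplex.homologyMap_comp]
    have := hC.isIso_homologyMap_ι hC' n
    have : IsIso (HomologicalComplex.homologyMap (s n) n) := by
      rw [← isIso_homologyMap_iff]
      infer_instance
    infer_instance
  refine ⟨inv (Q.map (Limits.Sigma.map s)) ≫ Q.map (Sigma.desc b) ≫ e.hom, fun n => ?_⟩
  rw [← cancel_epi (Q.map (s n)), ← Functor.map_comp_assoc, ← Sigma.ι_map,
    Functor.map_comp_assoc, IsIso.hom_inv_id_assoc, ← Functor.map_comp_assoc, Sigma.ι_desc,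
    ← hb]
  simp

/-- The coproduct of complexes `∐ C` remains a coproduct in the derived category. -/
lemma Hereditary.isDecomp (hH : Hereditary H) {C : ℤ → CochainComplex H ℤ}
    (hC : TwoTerm C) (hC' : Conc C) [HasCoproduct C] :
    IsDecomp (fun n => Q.obj (C n)) (fun n => Q.map (Sigma.ι C n)) where
  isStalk n := (isStalk_Q_obj_iff _ _).2 (hC' n)
  exists_desc g := hH.exists_desc hC hC' g
  hom_ext {Y f f'} h := by
    rw [← sub_eq_zero]
    have h0 : ∀ n, Q.map (Sigma.ι C n) ≫ (f - f') = 0 := fun n => by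
      rw [Preadditive.comp_sub, h, sub_self]
    generalize f - f' = φ at h0
    -- The maps `ι n` lift along the fibre `p : Z ⟶ ∐ C` of `φ`. The lifts assemble to `q` with
    -- `q ≫ p` an isomorphism on cohomology, which forces `φ = 0`.
    obtain ⟨Z, p, δ, hdist⟩ := distinguished_cocone_triangle₁ φ
    have hl : ∀ n, ∃ l : Q.obj (C n) ⟶ Z, Q.map (Sigma.ι C n) = l ≫ p := fun n =>
      Triangle.coyoneda_exact₂ _ hdist _ (h0 n)
    choose l hl using hl
    obtain ⟨q, hq⟩ := hH.exists_desc hC hC' l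
    have : IsIso (q ≫ p) := by
      rw [isIso_iff]
      intro n
      have := (isIso_homologyMap_iff _ _).2 (hC.isIso_homologyMap_ι hC' n)
      have h2 : IsIso ((homologyFunctor H n).map (Q.map (Sigma.ι C n)) ≫
          (homologyFunctor H n).map (q ≫ p)) := by
        rw [← Functor.map_comp, reassoc_of% (hq n), ← hl]
        infer_instance
      exact IsIso.of_isIso_comp_left ((homologyFunctor H n).map (Q.map (Sigma.ι C n))) _
    rw [← cancel_epi (q ≫ p), assoc, comp_zero]
    have : p ≫ φ = 0 := comp_distTriang_mor_zero₁₂ _ hdist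
    rw [this, comp_zero]
  exists_sum {W} k hW g := by
    obtain ⟨W', ⟨e⟩⟩ : ∃ K, Nonempty (Q.obj K ≅ W) := ⟨_, ⟨Q.objObjPreimageIso W⟩⟩
    obtain ⟨D, _, _, s, _, b, hb⟩ := hH.exists_roof k (hW.of_iso e.symm) (e.hom ≫ g)
    refine ⟨fun m => e.inv ≫ inv (Q.map s) ≫ Q.map (b ≫ Sigma.π C m), ?_⟩
    rw [← cancel_epi e.hom, ← cancel_epi (Q.map s), hb]
    conv_lhs => rw [hC.hom_eq_sum D k b]
    rw [Functor.map_sum, Preadditive.comp_sum, Preadditive.comp_sum]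
    simp

/-- Over a hereditary category each complex is the coproduct of its cohomology stalks. -/
lemma Hereditary.exists_decomp (hH : Hereditary H) (X : DerivedCategory H) :
    ∃ (C : ℤ → DerivedCategory H) (ι : ∀ n, C n ⟶ X), IsDecomp C ι := by
  obtain ⟨K, ⟨e⟩⟩ : ∃ K, Nonempty (Q.obj K ≅ X) := ⟨_, ⟨Q.objObjPreimageIso X⟩⟩
  choose C h1 h2 φ hφ hC' using hH.exists_twoTerm K
  have hC : TwoTerm C := fun n => ⟨h1 n, h2 n⟩
  have := hC.hasCoproduct
  have : IsIso (Q.map (Sigma.desc φ)) := by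
    apply isIso_Q_map_of_ι hC hC'
    intro n
    rw [Sigma.ι_desc]
    exact hφ n
  exact ⟨_, _, (hH.isDecomp hC hC').of_iso (asIso (Q.map (Sigma.desc φ)) ≪≫ e)⟩

end

end PseudoId

namespace PseudoId

section

variable {H}

open DerivedCategory

variable {F : DerivedCategory H ⥤ DerivedCategory H}

/-! ### Values of a pseudo-identity -/

lemma IsStalk.mem_coreSet {X : DerivedCategory H} (h : IsStalk X 0) :
    X ∈ coreSet (Dge H) (Dle H) := by
  have := h.isGE
  have := h.isLE
  constructor
  · obtain ⟨K, _, ⟨e⟩⟩ := exists_iso_Q_obj_of_isGE X 0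
    exact ⟨K, fun n hn => K.isZero_of_isStrictlyGE 0 n hn, ⟨e⟩⟩
  · obtain ⟨K, _, ⟨e⟩⟩ := exists_iso_Q_obj_of_isLE X 0
    exact ⟨K, fun n hn => K.isZero_of_isStrictlyLE 0 n hn, ⟨e⟩⟩

/-- The isomorphism given by the equality `F.obj X = X`. It is natural on the core, but no
naturality is available elsewhere. -/
noncomputable def objIso (hF : IsPseudoIdentity (Dge H) (Dle H) F) (X : DerivedCategory H) :
    F.obj X ≅ X := eqToIso (hF.obj_eq X)

lemma objIso_naturality (hF : IsPseudoIdentity (Dge H) (Dle H) F) {X Y : DerivedCategory H}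
    (hX : IsStalk X 0) (hY : IsStalk Y 0) (f : X ⟶ Y) :
    F.map f ≫ (objIso hF Y).hom = (objIso hF X).hom ≫ f := by
  simp [objIso, hF.map_core X Y hX.mem_coreSet hY.mem_coreSet f]

lemma IsDecomp.exists_desc_map (hF : IsPseudoIdentity (Dge H) (Dle H) F)
    {X : DerivedCategory H} {C : ℤ → DerivedCategory H} {ι : ∀ n, C n ⟶ X} (h : IsDecomp C ι)
    {Y : DerivedCategory H} (g : ∀ n, F.obj (C n) ⟶ Y) :
    ∃ f : F.obj X ⟶ Y, ∀ n, F.map (ι n) ≫ f = g n := by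
  have := hF.isEquivalence
  obtain ⟨f, hf⟩ := h.exists_desc (fun n => F.preimage (g n ≫ (objIso hF Y).inv))
  refine ⟨F.map f ≫ (objIso hF Y).hom, fun n => ?_⟩
  rw [← F.map_comp_assoc, hf]
  simp

lemma IsDecomp.hom_ext_map (hF : IsPseudoIdentity (Dge H) (Dle H) F)
    {X : DerivedCategory H} {C : ℤ → DerivedCategory H} {ι : ∀ n, C n ⟶ X} (h : IsDecomp C ι)
    {Y : DerivedCategory H} {f f' : F.obj X ⟶ Y}
    (hf : ∀ n, F.map (ι n) ≫ f = F.map (ι n) ≫ f') : f = f' := by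
  have := hF.isEquivalence
  rw [← cancel_mono (objIso hF Y).inv]
  obtain ⟨g, hg⟩ := F.map_surjective (f ≫ (objIso hF Y).inv)
  obtain ⟨g', hg'⟩ := F.map_surjective (f' ≫ (objIso hF Y).inv)
  rw [← hg, ← hg']
  congr 1
  apply h.hom_ext
  intro n
  apply F.map_injective
  rw [F.map_comp, F.map_comp, hg, hg', reassoc_of% (hf n)]

/-! ### The isomorphism on stalk objects -/

variable [F.CommShift ℤ]

/-- The candidate for the isomorphism `F ≅ 𝟭` on objects `X` with cohomology in degree `n`: it is
transported along the shift from the identification `F.obj (X⟦n⟧) = X⟦n⟧` of core objects. It is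
defined for all `X`, but is meaningful only on stalk objects in degree `n`. -/
noncomputable def stalkHom (hF : IsPseudoIdentity (Dge H) (Dle H) F) (n : ℤ)
    (X : DerivedCategory H) : F.obj X ≅ X :=
  (shiftFunctor (DerivedCategory H) n).preimageIso
    ((F.commShiftIso n).symm.app X ≪≫ objIso hF (X⟦n⟧))

lemma stalkHom_shift (hF : IsPseudoIdentity (Dge H) (Dle H) F) (n : ℤ)
    (X : DerivedCategory H) :
    (stalkHom hF n X).hom⟦n⟧' = (F.commShiftIso n).inv.app X ≫ (objIso hF (X⟦n⟧)).hom := by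
  simp [stalkHom]

lemma stalkHom_naturality (hF : IsPseudoIdentity (Dge H) (Dle H) F) (n : ℤ)
    {X Y : DerivedCategory H} (hX : IsStalk X n) (hY : IsStalk Y n) (f : X ⟶ Y) :
    F.map f ≫ (stalkHom hF n Y).hom = (stalkHom hF n X).hom ≫ f := by
  apply (shiftFunctor (DerivedCategory H) n).map_injective
  rw [Functor.map_comp, Functor.map_comp, stalkHom_shift, stalkHom_shift, assoc,
    ← objIso_naturality hF (hX.shift n 0 (by simp)) (hY.shift n 0 (by simp))]
  simp

lemma stalkHom_obj_shift (hF : IsPseudoIdentity (Dge H) (Dle H) F) (m n p : ℤ) (h : m + n = p)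
    {X : DerivedCategory H} (hX : IsStalk X p) :
    (stalkHom hF n (X⟦m⟧)).hom =
      (F.commShiftIso m).hom.app X ≫ (stalkHom hF p X).hom⟦m⟧' := by
  apply (shiftFunctor (DerivedCategory H) n).map_injective
  have h1 : (shiftFunctor (DerivedCategory H) n).map ((stalkHom hF p X).hom⟦m⟧') =
      (shiftFunctorAdd' _ m n p h).inv.app _ ≫ (stalkHom hF p X).hom⟦p⟧' ≫
        (shiftFunctorAdd' _ m n p h).hom.app _ := by
    simp
  have h2 := objIso_naturality hF (hX.shift p 0 (by simp))
    ((hX.shift m n h).shift n 0 (by simp))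
    ((shiftFunctorAdd' (DerivedCategory H) m n p h).hom.app X)
  rw [Functor.map_comp, h1, stalkHom_shift, stalkHom_shift, assoc, ← h2,
    F.commShiftIso_add' h, Functor.CommShift.isoAdd'_inv_app]
  simp [← Functor.map_comp_assoc]

variable [F.IsTriangulated]

/-- Naturality for a class `f` in `Ext^1`. A morphism of triangles from `F` of the triangle
`W ⟶ E ⟶ X ⟶ W⟦1⟧` to the triangle itself, extending the given components at `W` and `E`, has some
third component `c`; it agrees with the component at `X` because their difference factors through
a map `W⟦1⟧ ⟶ X`, and such maps vanish for degree reasons. -/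
lemma stalkHom_naturality_ext (hF : IsPseudoIdentity (Dge H) (Dle H) F) (n : ℤ)
    {X W : DerivedCategory H} (hX : IsStalk X n) (hW : IsStalk W n) (f : X ⟶ W⟦(1 : ℤ)⟧) :
    F.map f ≫ (stalkHom hF (n - 1) (W⟦(1 : ℤ)⟧)).hom = (stalkHom hF n X).hom ≫ f := by
  obtain ⟨E, i, p, hdist⟩ := distinguished_cocone_triangle₂ f
  have hE : IsStalk E n := by
    obtain ⟨h1, h2⟩ := hX
    obtain ⟨h3, h4⟩ := hW
    rw [isGE_iff] at h1 h3
    rw [isLE_iff] at h2 h4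
    constructor
    · rw [isGE_iff]
      intro j hj
      exact (HomologySequence.exact₂ _ hdist j).isZero_X₂ ((h3 j hj).eq_of_src _ _)
        ((h1 j hj).eq_of_tgt _ _)
    · rw [isLE_iff]
      intro j hj
      exact (HomologySequence.exact₂ _ hdist j).isZero_X₂ ((h4 j hj).eq_of_src _ _)
        ((h2 j hj).eq_of_tgt _ _)
  have hFd := F.map_distinguished _ hdist
  obtain ⟨c, hc1, hc2⟩ : ∃ c : F.obj X ⟶ X, F.map p ≫ c = (stalkHom hF n E).hom ≫ p ∧
      (F.map f ≫ (F.commShiftIso (1 : ℤ)).hom.app W) ≫ (stalkHom hF n W).hom⟦(1 : ℤ)⟧' = c ≫ f :=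
    complete_distinguished_triangle_morphism _ _ hFd hdist
      (stalkHom hF n W).hom (stalkHom hF n E).hom (stalkHom_naturality hF n hW hE i)
  have hc : c = (stalkHom hF n X).hom := by
    rw [← sub_eq_zero]
    obtain ⟨t, ht⟩ : ∃ t : (F.obj W)⟦(1 : ℤ)⟧ ⟶ X, c - (stalkHom hF n X).hom =
        (F.map f ≫ (F.commShiftIso (1 : ℤ)).hom.app W) ≫ t :=
      Triangle.yoneda_exact₃ _ hFd (c - (stalkHom hF n X).hom) (by
      change F.map p ≫ _ = 0
      rw [Preadditive.comp_sub, hc1, stalkHom_naturality hF n hE hX p, sub_self])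
    have hFW : IsStalk (F.obj W) n := hW.of_iso (objIso hF W).symm
    have h1 : ((F.obj W)⟦(1 : ℤ)⟧).IsLE (n - 1) := (hFW.shift 1 (n - 1) (by ring)).isLE
    have h2 := hX.isGE
    have : t = 0 := TStructure.t.zero (X := (F.obj W)⟦(1 : ℤ)⟧) t (n - 1) n (by simp)
    rw [ht, this, comp_zero]
  rw [stalkHom_obj_shift hF 1 (n - 1) n (by ring) hW, ← hc, ← hc2, assoc]

/-- Naturality for morphisms between stalk objects whose degrees differ by at most one. -/
lemma stalkHom_naturality_of_mem (hF : IsPseudoIdentity (Dge H) (Dle H) F) (n m : ℤ)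
    (hm : m ∈ ({n - 1, n, n + 1} : Finset ℤ))
    {X Y : DerivedCategory H} (hX : IsStalk X n) (hY : IsStalk Y m) (f : X ⟶ Y) :
    F.map f ≫ (stalkHom hF m Y).hom = (stalkHom hF n X).hom ≫ f := by
  simp only [Finset.mem_insert, Finset.mem_singleton] at hm
  rcases hm with rfl | rfl | rfl
  · let e : Y ≅ (Y⟦(-1 : ℤ)⟧)⟦(1 : ℤ)⟧ :=
      ((shiftFunctorCompIsoId _ (-1 : ℤ) 1 (by simp)).app Y).symm
    have h1 := hY.shift (-1) n (by ring)
    have h2 := stalkHom_naturality_ext hF n hX h1 (f ≫ e.hom)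
    rw [F.map_comp, assoc, stalkHom_naturality hF (n - 1) hY (hY.of_iso e) e.hom] at h2
    rw [← cancel_mono e.hom, assoc, h2, assoc]
  · exact stalkHom_naturality hF m hX hY f
  · have h1 := hX.isLE
    have h2 := hY.isGE
    have : f = 0 := TStructure.t.zero f n (n + 1) (by simp)
    simp [this]

/-! ### Extension to all objects -/

theorem exists_iso (hH : Hereditary H) (hF : IsPseudoIdentity (Dge H) (Dle H) F) :
    ∃ e : F ≅ 𝟭 (DerivedCategory H), NatTrans.CommShift e.hom ℤ := by
  choose C ι hι using hH.exists_decomp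
  choose θ hθ using fun X => (hι X).exists_desc_map hF
    (fun n => (stalkHom hF n (C X n)).hom ≫ ι X n)
  choose θ' hθ' using fun X => (hι X).exists_desc
    (fun n => (stalkHom hF n (C X n)).inv ≫ F.map (ι X n))
  -- `θ` is compatible with every morphism out of a stalk object, not just with the `ι X n`; both
  -- naturality and compatibility with shifts follow from this.
  have key : ∀ (W X : DerivedCategory H) (k : ℤ) (_ : IsStalk W k) (h : W ⟶ X),
      F.map h ≫ θ X = (stalkHom hF k W).hom ≫ h := by
    intro W X k hW h
    obtain ⟨h', hh'⟩ := (hι X).exists_sum k hW h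
    rw [hh', F.map_sum, Preadditive.sum_comp, Preadditive.comp_sum]
    refine Finset.sum_congr rfl (fun m hm => ?_)
    rw [F.map_comp, assoc, hθ,
      ← reassoc_of% (stalkHom_naturality_of_mem hF k m hm hW ((hι X).isStalk m) (h' m))]
  let e : F ≅ 𝟭 (DerivedCategory H) := NatIso.ofComponents
    (fun X => ⟨θ X, θ' X, (hι X).hom_ext_map hF (fun n => by
      rw [reassoc_of% (hθ X n), hθ']
      simp), (hι X).hom_ext (fun n => by
      dsimp
      rw [reassoc_of% (hθ' X n), hθ]
      simp)⟩)
    (fun {X Y} f => (hι X).hom_ext_map hF (fun n => by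
      dsimp
      rw [← F.map_comp_assoc, key _ _ n ((hι X).isStalk n), reassoc_of% (hθ X n)]))
  refine ⟨e, ⟨fun m => ?_⟩⟩
  ext X
  have h0 : θ (X⟦m⟧) = (F.commShiftIso m).hom.app X ≫ (θ X)⟦m⟧' := by
    rw [← cancel_epi ((F.commShiftIso m).inv.app X), Iso.inv_hom_id_app_assoc]
    obtain ⟨r, hr⟩ := (shiftFunctor (DerivedCategory H) m).map_surjective
      ((F.commShiftIso m).inv.app X ≫ θ (X⟦m⟧))
    rw [← hr]
    congr 1
    apply (hι X).hom_ext_map hF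
    intro n
    apply (shiftFunctor (DerivedCategory H) m).map_injective
    have hst := (hι X).isStalk n
    rw [hθ, Functor.map_comp, hr, F.commShiftIso_inv_naturality_assoc,
      key _ _ (n - m) (hst.shift m (n - m) (by ring)),
      stalkHom_obj_shift hF m (n - m) n (by ring) hst]
    simp
  simpa [e] using h0.symm

end

end PseudoId


/-- Proposition 6.6: if `H` is a hereditary abelian category
(`Ext^n = 0` for `n ≥ 2`, Ext groups being Hom groups between shifted stalk complexes in
`D(H)`), then any pseudo-identity on `D(H)` with respect to the canonical pre-weight
structure is isomorphic, as a triangle functor, to the identity functor. -/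
theorem derivedCategory_pseudoIdentity_iso_id_of_hereditary
    (hH : ∀ (M N : H) (n : ℕ), 2 ≤ n →
      ∀ f : (DerivedCategory.singleFunctor H 0).obj M ⟶
        ((DerivedCategory.singleFunctor H 0).obj N)⟦(n : ℤ)⟧, f = 0)
    (F : DerivedCategory H ⥤ DerivedCategory H)
    [F.CommShift ℤ] [F.IsTriangulated]
    (hF : IsPseudoIdentity (Dge H) (Dle H) F) :
    ∃ e : F ≅ 𝟭 (DerivedCategory H), NatTrans.CommShift e.hom ℤ := by
  exact PseudoId.exists_iso hH hF
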